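/- arXiv:2604.18577 — 2 statements merged into one kernel-verified Lean document; each statement's English description precedes it below -/
import Mathlib

section
/- (Finite-tuple covering theorem.) Let 𝒜 = (A₁,…,A_q) be a tuple of finite nonempty subsets of an abelian group G, with |A_i| = k_i for 1 ≤ i ≤ q. Then for every r ∈ ℕ and every h ∈ ℕ₀^q there exists a set X_h ⊆ G such that (rh)·𝒜 ⊆ X_h + h·𝒜 and |X_h| ≤ ∏_{i=1}^q C((r+1)(k_i−1), k_i−1). In particular, every finite tuple is a chromatic (r,ℓ)-approximate group with ℓ = ∏_{i=1}^q C((r+1)(k_i−1), k_i−1). -/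
open Pointwise BigOperators

/-- The `h`-fold iterated sumset `hA = A + ⋯ + A` (`h` times), with `0A = {0}`. -/
def hfold {G : Type*} [AddCommMonoid G] : ℕ → Set G → Set G
  | 0, _ => {0}
  | n + 1, A => A + hfold n A

/-- The chromatic sumset `h·𝒜 = h₁A₁ + ⋯ + h_qA_q`. -/
def chromSum {G : Type*} [AddCommMonoid G] {q : ℕ} (h : Fin q → ℕ) (A : Fin q → Set G) :
    Set G :=
  ∑ i, hfold (h i) (A i)

/-!
Translating one element of a finite set `s` to `0` does not affect the number of translates
needed. When `0 ∈ s`, put `n = |s| - 1` and suppose `n ≠ 0`; a point of `(rh)s` is a combination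
of the `n` nonzero elements of `s` with coefficients in `ℕ` of total at most `rh`. Dividing each
coefficient by `d + 1` with remainder, where `d = ⌊h / n⌋`, the remainders add up to at most
`n d ≤ h`, so they describe a point of `hs`, while the quotients add up to at most
`rh / (d + 1) ≤ rn`, so they describe a point of `(rn)s`. Hence the dilate of `(rn)s` by `d + 1`
can serve as the set of translates, and it has at most as many points as there are multisets of
size `rn` in `s`. For a tuple of sets, add up the sets of translates.
-/

open scoped Finset

theorem multichoose_succ_mul (n r : ℕ) : (n + 1).multichoose (r * n) = ((r + 1) * n).choose n := by
  rw [Nat.multichoose_eq, add_right_comm, Nat.add_sub_cancel, add_comm, Nat.choose_symm_add,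
    Nat.succ_mul]

section AddCommMonoid

variable {G : Type*} [AddCommMonoid G]

-- For a natural number acting on a set of `G`, two pointwise instances apply: here and below
-- `n • A` elaborates to the iterated sumset, not to the dilate `{n • a | a ∈ A}`.
theorem hfold_eq_nsmul (n : ℕ) (A : Set G) : hfold n A = n • A := by
  induction n with
  | zero => rw [hfold, zero_nsmul, Set.singleton_zero]
  | succ n ih => rw [hfold, ih, succ_nsmul']

theorem sum_nsmul_mem_sum_nsmul [DecidableEq G] (s : Finset G) (f : G → ℕ) :
    ∑ a ∈ s, f a • a ∈ (∑ a ∈ s, f a) • s := by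
  rw [← Finset.sum_nsmul_assoc, ← Finset.mem_coe, Finset.coe_sum]
  exact Set.finsetSum_mem_finsetSum _ _ _ fun a ha => Finset.nsmul_mem_nsmul ha

theorem nsmul_eq_image_finsuppAntidiag [DecidableEq G] (n : ℕ) (s : Finset G) :
    n • s = (s.finsuppAntidiag n).image fun f => ∑ a ∈ s, f a • a := by
  ext x
  simp only [Finset.mem_image, Finset.mem_finsuppAntidiag]
  constructor
  · intro hx
    rw [← Finset.mem_coe, Finset.coe_nsmul, Set.mem_nsmul_iff_sum] at hx
    obtain ⟨g, hg, rfl⟩ := hx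
    let t : Multiset G := Finset.univ.val.map g
    have ht : ∀ a ∈ t, a ∈ s := by simpa [t] using hg
    have toFinset_subset : t.toFinset ⊆ s := fun a ha => ht a (Multiset.mem_toFinset.1 ha)
    refine ⟨Multiset.toFinsupp t, ⟨?_, ?_⟩, ?_⟩
    · exact (Multiset.sum_count_eq_card ht).trans (by simp [t])
    · rwa [Multiset.toFinsupp_support]
    · exact (Finset.sum_multiset_count_of_subset t s toFinset_subset).symm
  · rintro ⟨f, ⟨rfl, -⟩, rfl⟩
    exact sum_nsmul_mem_sum_nsmul s f

theorem card_nsmul_le_multichoose [DecidableEq G] (n : ℕ) (s : Finset G) :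
    #(n • s) ≤ (#s).multichoose n := by
  rw [nsmul_eq_image_finsuppAntidiag, ← Finset.card_finsuppAntidiag_nat_eq_multichoose]
  exact Finset.card_image_le

theorem sum_nsmul_mem_nsmul_of_zero_mem [DecidableEq G] {s : Finset G} (hs : 0 ∈ s) {f : G → ℕ}
    {n : ℕ} (hf : ∑ a ∈ s.erase 0, f a ≤ n) : ∑ a ∈ s, f a • a ∈ n • s := by
  rw [← Finset.sum_erase s (f := fun a => f a • a) (smul_zero (f 0))]
  exact Finset.nsmul_subset_nsmul (s.erase_subset 0) hs hf (sum_nsmul_mem_sum_nsmul _ f)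

theorem nsmul_subset_image_nsmul_add_nsmul [DecidableEq G] {s : Finset G} (hs : 0 ∈ s)
    {d h M N : ℕ} (hN : N ≤ (d + 1) * M) (hh : (#s - 1) * d ≤ h) :
    N • s ⊆ (M • s).image (fun x => (d + 1) • x) + h • s := by
  intro x hx
  rw [nsmul_eq_image_finsuppAntidiag] at hx
  obtain ⟨f, hf, rfl⟩ := Finset.mem_image.1 hx
  rw [Finset.mem_finsuppAntidiag] at hf
  have quotients_le : ∑ a ∈ s.erase 0, f a / (d + 1) ≤ M := by
    refine Nat.le_of_mul_le_mul_left (c := d + 1) ?_ d.succ_pos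
    calc (d + 1) * ∑ a ∈ s.erase 0, f a / (d + 1)
        = ∑ a ∈ s.erase 0, (d + 1) * (f a / (d + 1)) := Finset.mul_sum ..
      _ ≤ ∑ a ∈ s.erase 0, f a := Finset.sum_le_sum fun a _ => Nat.mul_div_le _ _
      _ ≤ ∑ a ∈ s, f a := Finset.sum_le_sum_of_subset (s.erase_subset 0)
      _ ≤ (d + 1) * M := hf.1.trans_le hN
  have remainders_le : ∑ a ∈ s.erase 0, f a % (d + 1) ≤ h := by
    calc ∑ a ∈ s.erase 0, f a % (d + 1)
        ≤ #(s.erase 0) • d :=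
          Finset.sum_le_card_nsmul _ _ _ fun a _ => Nat.le_of_lt_succ (Nat.mod_lt _ d.succ_pos)
      _ = (#s - 1) * d := by rw [Finset.card_erase_of_mem hs, smul_eq_mul]
      _ ≤ h := hh
  have division : ∑ a ∈ s, f a • a =
      (d + 1) • ∑ a ∈ s, (f a / (d + 1)) • a + ∑ a ∈ s, (f a % (d + 1)) • a := by
    rw [Finset.smul_sum, ← Finset.sum_add_distrib]
    refine Finset.sum_congr rfl fun a _ => ?_
    rw [smul_smul, ← add_smul, Nat.div_add_mod]
  rw [division]
  exact Finset.add_mem_add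
    (Finset.mem_image_of_mem _ (sum_nsmul_mem_nsmul_of_zero_mem hs quotients_le))
    (sum_nsmul_mem_nsmul_of_zero_mem hs remainders_le)

theorem covByVAdd_nsmul_of_zero_mem {s : Finset G} (hs : 0 ∈ s) (r h : ℕ) :
    CovByVAdd G ((#s).multichoose (r * (#s - 1))) ((r * h) • (s : Set G)) (h • (s : Set G)) := by
  classical
  obtain hn | hn := Nat.eq_zero_or_pos (#s - 1)
  · have card_le : #s ≤ #({0} : Finset G) := by
      rw [Finset.card_singleton]
      omega
    obtain rfl : {0} = s :=
      Finset.eq_of_subset_of_card_le (Finset.singleton_subset_iff.2 hs) card_le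
    simp
  set d := h / (#s - 1)
  have hN : r * h ≤ (d + 1) * (r * (#s - 1)) := by
    calc r * h ≤ r * ((#s - 1) * (d + 1)) := by
          gcongr
          exact (Nat.lt_mul_div_succ h hn).le
      _ = (d + 1) * (r * (#s - 1)) := by ring
  refine ⟨((r * (#s - 1)) • s).image fun x => (d + 1) • x, ?_, ?_⟩
  · exact_mod_cast Finset.card_image_le.trans (card_nsmul_le_multichoose _ s)
  · exact_mod_cast nsmul_subset_image_nsmul_add_nsmul hs hN (Nat.mul_div_le h _)

theorem covByVAdd_add {K L : ℝ} {A B C D : Set G} (hAB : CovByVAdd G K A B)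
    (hCD : CovByVAdd G L C D) : CovByVAdd G (K * L) (A + C) (B + D) := by
  classical
  have hK := hAB.nonneg
  obtain ⟨X, hX, hXB⟩ := hAB
  obtain ⟨Y, hY, hYD⟩ := hCD
  refine ⟨X + Y, ?_, ?_⟩
  · calc (#(X + Y) : ℝ) ≤ #X * #Y := mod_cast Finset.card_add_le
      _ ≤ K * L := by gcongr
  · calc A + C ⊆ (X + B) + (Y + D) := Set.add_subset_add hXB hYD
      _ = ((X + Y : Finset G) : Set G) +ᵥ (B + D) := by
          rw [Finset.coe_add, vadd_eq_add, add_add_add_comm]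

theorem covByVAdd_sum {ι : Type*} (I : Finset ι) {K : ι → ℝ} {A B : ι → Set G}
    (hAB : ∀ i ∈ I, CovByVAdd G (K i) (A i) (B i)) :
    CovByVAdd G (∏ i ∈ I, K i) (∑ i ∈ I, A i) (∑ i ∈ I, B i) := by
  induction I using Finset.cons_induction with
  | empty => exact .rfl
  | cons i I hi ih =>
    rw [Finset.forall_mem_cons] at hAB
    simp only [Finset.prod_cons, Finset.sum_cons]
    exact covByVAdd_add hAB.1 (ih hAB.2)

end AddCommMonoid

section AddCommGroup

variable {G : Type*} [AddCommGroup G]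

theorem covByVAdd_singleton_add (a b : G) {K : ℝ} {A B : Set G} (hAB : CovByVAdd G K A B) :
    CovByVAdd G K ({a} + A) ({b} + B) := by
  have hab : CovByVAdd G 1 ({a} : Set G) {b} := ⟨{a - b}, by simp, by simp⟩
  simpa only [one_mul] using covByVAdd_add hab hAB

theorem covByVAdd_nsmul {A : Set G} (hfin : A.Finite) (hne : A.Nonempty) (r h : ℕ) :
    CovByVAdd G (((r + 1) * (A.ncard - 1)).choose (A.ncard - 1) : ℕ) ((r * h) • A) (h • A) := by
  classical
  obtain ⟨s, rfl⟩ := hfin.exists_finset_coe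
  obtain ⟨c, hc⟩ := hne
  obtain ⟨n, hn⟩ : ∃ n, #s = n + 1 :=
    Nat.exists_eq_add_one.2 (Finset.card_pos.2 ⟨c, hc⟩)
  have zero_mem : 0 ∈ {-c} + s := by
    simpa using Finset.add_mem_add (Finset.mem_singleton_self (-c)) (Finset.mem_coe.1 hc)
  have translate_eq : {c} + (({-c} + s : Finset G) : Set G) = s := by
    rw [Finset.coe_add, Finset.coe_singleton, ← add_assoc, Set.singleton_add_singleton,
      add_neg_cancel, Set.singleton_zero, zero_add]
  have cover := covByVAdd_singleton_add ((r * h) • c) (h • c)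
    (covByVAdd_nsmul_of_zero_mem zero_mem r h)
  rw [Set.ncard_coe_finset, hn, Nat.add_sub_cancel, ← multichoose_succ_mul]
  rwa [← Set.nsmul_singleton, ← Set.nsmul_singleton, ← nsmul_add, ← nsmul_add, translate_eq,
    Finset.card_singleton_add, hn, Nat.add_sub_cancel] at cover

end AddCommGroup

/-- Finite-tuple covering theorem: for a tuple of finite nonempty sets with `|Aᵢ| = kᵢ`,
for every `r` and every chromatic parameter `h` there is `X_h` with
`(rh)·𝒜 ⊆ X_h + h·𝒜` and `|X_h| ≤ ∏ᵢ C((r+1)(kᵢ−1), kᵢ−1)`; in particular `𝒜` is a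
chromatic `(r, ∏ᵢ C((r+1)(kᵢ−1), kᵢ−1))`-approximate group. -/
theorem stmt7 {G : Type*} [AddCommGroup G] {q : ℕ} (A : Fin q → Set G) (k : Fin q → ℕ)
    (hfin : ∀ i, (A i).Finite) (hne : ∀ i, (A i).Nonempty)
    (hcard : ∀ i, (A i).ncard = k i) (r : ℕ) (hr : 0 < r) :
    ∀ h : Fin q → ℕ,
      ∃ X : Finset G, X.card ≤ ∏ i, ((r + 1) * (k i - 1)).choose (k i - 1) ∧
        chromSum (fun i => r * h i) A ⊆ ↑X + chromSum h A := by
  intro h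
  have cover (i : Fin q) :
      CovByVAdd G (((r + 1) * (k i - 1)).choose (k i - 1) : ℕ) ((r * h i) • A i) (h i • A i) := by
    simpa only [hcard i] using covByVAdd_nsmul (hfin i) (hne i) r (h i)
  obtain ⟨X, hX, hsub⟩ := covByVAdd_sum Finset.univ fun i _ => cover i
  refine ⟨X, mod_cast hX, ?_⟩
  simpa only [chromSum, hfold_eq_nsmul, vadd_eq_add] using hsub
end

section
/- (Chromatic theorem for unions of unbounded linear sets.) Let 𝒜 = (A₁,…,A_q) be a tuple of subsets of an abelian group G such that for each i, the set A_i is a union of k_i unbounded linear sets. Then for every r ∈ ℕ, the tuple 𝒜 is a chromatic asymptotic (r,ℓ)-approximate group with ℓ = ∏_{i=1}^q C((r+1)(k_i−1), k_i−1). -/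
open Pointwise BigOperators

/-- `𝒜` is a chromatic asymptotic `(r,ℓ)`-approximate group: there is a threshold vector
`h₀` such that for all `h ⪰ h₀` there is `X_h ⊆ G` with `|X_h| ≤ ℓ` and
`(rh)·𝒜 ⊆ X_h + h·𝒜`. -/
def IsCAAG {G : Type*} [AddCommGroup G] {q : ℕ} (A : Fin q → Set G) (r ℓ : ℕ) : Prop :=
  ∃ h₀ : Fin q → ℕ, ∀ h : Fin q → ℕ, (∀ i, h₀ i ≤ h i) →
    ∃ X : Finset G, X.card ≤ ℓ ∧
      chromSum (fun i => r * h i) A ⊆ ↑X + chromSum h A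

/-- An unbounded linear set `P(a; b₁,…,b_d) = {a + n₁b₁ + ⋯ + n_d b_d : nⱼ ∈ ℕ₀}`. -/
def IsUnboundedLinear {G : Type*} [AddCommMonoid G] (S : Set G) : Prop :=
  ∃ (d : ℕ) (a : G) (b : Fin d → G),
    S = {x | ∃ n : Fin d → ℕ, x = a + ∑ j, n j • b j}

/-!
If every `P j = a j + M j` is a translate of a submonoid, then the `t`-fold sumsets of `P j` with
`t ≠ 0` are all translates of `M j`, by `t • a j`. A point of the `rh`-fold sumset of
`A = ⋃ j, P j` uses `u j` summands from each `P j`, with `∑ j, u j = rh`; replacing `u` by any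
`v` with `∑ j, v j = h` that vanishes only where `u` does moves it into `hA` by a translation by
`∑ j, (u j - v j) • a j`. Hence it suffices to choose `v` so that few differences `u - v` occur.

With `k` sets, `n = k - 1` and an `m` satisfying `n m < h` and `r h < (r n + 1) m`, reduce all
coordinates of `u` but one modulo `m` to remainders `≤ m`, the remaining coordinate absorbing the
excess. The difference `u - v` is then determined by the vector of quotients, whose total is at most
`r n`; completed by a slack coordinate it is one of the `((r + 1) n).choose n` vectors in `ℕ ^ k` of
total `r n`.
-/

section Hfold

variable {G ι : Type*} [AddCommMonoid G]

lemma one_hfold (A : Set G) : hfold 1 A = A := by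
  simp [hfold]

lemma add_hfold (m n : ℕ) (A : Set G) : hfold (m + n) A = hfold m A + hfold n A := by
  induction m with
  | zero => simp [hfold]
  | succ m ih => rw [Nat.succ_add, hfold, hfold, ih, add_assoc]

lemma sum_hfold (s : Finset ι) (u : ι → ℕ) (A : Set G) :
    hfold (∑ j ∈ s, u j) A = ∑ j ∈ s, hfold (u j) A := by
  classical
  induction s using Finset.induction_on with
  | empty => rfl
  | insert j s hj ih => rw [Finset.sum_insert hj, Finset.sum_insert hj, add_hfold, ih]

lemma hfold_mono {A B : Set G} (n : ℕ) (h : A ⊆ B) : hfold n A ⊆ hfold n B := by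
  induction n with
  | zero => rfl
  | succ n ih => exact Set.add_subset_add h ih

lemma hfold_empty {n : ℕ} (hn : n ≠ 0) : hfold n (∅ : Set G) = ∅ := by
  obtain ⟨n, rfl⟩ := Nat.exists_eq_succ_of_ne_zero hn
  exact Set.empty_add

lemma sum_hfold_subset_hfold_iUnion [Fintype ι] (P : ι → Set G) (u : ι → ℕ) :
    ∑ j, hfold (u j) (P j) ⊆ hfold (∑ j, u j) (⋃ j, P j) := by
  rw [sum_hfold]
  exact Set.finsetSum_subset_finsetSum _ _ _ fun j _ => hfold_mono (u j) (Set.subset_iUnion P j)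

lemma exists_mem_sum_hfold_of_mem_hfold_iUnion [Fintype ι] {P : ι → Set G} {n : ℕ} {x : G}
    (hx : x ∈ hfold n (⋃ j, P j)) :
    ∃ u : ι → ℕ, ∑ j, u j = n ∧ x ∈ ∑ j, hfold (u j) (P j) := by
  classical
  induction n generalizing x with
  | zero => exact ⟨0, by simp, by simpa [hfold] using hx⟩
  | succ n ih =>
    obtain ⟨p, hp, y, hy, rfl⟩ := Set.mem_add.1 hx
    obtain ⟨u, hu, hyu⟩ := ih hy
    obtain ⟨i, hpi⟩ := Set.mem_iUnion.1 hp
    have hsingle : ∑ j, hfold ((Pi.single i 1 : ι → ℕ) j) (P j) = P i := by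
      rw [Fintype.sum_eq_single i fun j hj => by rw [Pi.single_eq_of_ne hj]; rfl,
        Pi.single_eq_same, one_hfold]
    refine ⟨Pi.single i 1 + u, by simp [Finset.sum_add_distrib, hu, add_comm], ?_⟩
    simp only [Pi.add_apply, add_hfold, Finset.sum_add_distrib, hsingle]
    exact Set.add_mem_add hpi hyu

lemma hfold_vadd_addSubmonoid (a : G) (M : AddSubmonoid G) {n : ℕ} (hn : n ≠ 0) :
    hfold n (a +ᵥ (M : Set G)) = (n • a) +ᵥ (M : Set G) := by
  induction n, Nat.one_le_iff_ne_zero.2 hn using Nat.le_induction with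
  | base => rw [one_hfold, one_nsmul]
  | succ n hle ih =>
    rw [hfold, ih (Nat.one_le_iff_ne_zero.1 hle), vadd_add_vadd_comm, M.coe_add_self_eq,
      succ_nsmul']

lemma IsUnboundedLinear.exists_eq_vadd {S : Set G} (hS : IsUnboundedLinear S) :
    ∃ (a : G) (M : AddSubmonoid G), S = a +ᵥ (M : Set G) := by
  obtain ⟨d, a, b, rfl⟩ := hS
  refine ⟨a, AddSubmonoid.closure (Set.range b), Set.ext fun x => ?_⟩
  simp only [Set.mem_vadd_set, SetLike.mem_coe, AddSubmonoid.mem_closure_range_iff_of_fintype]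
  constructor
  · rintro ⟨n, rfl⟩
    exact ⟨_, ⟨n, rfl⟩, rfl⟩
  · rintro ⟨_, ⟨n, rfl⟩, rfl⟩
    exact ⟨n, rfl⟩

end Hfold

section Translate

variable {G ι : Type*} [AddCommGroup G]

lemma hfold_vadd_addSubmonoid_subset (a : G) (M : AddSubmonoid G) {m n : ℕ}
    (h : n = 0 → m = 0) :
    hfold m (a +ᵥ (M : Set G)) ⊆ {((m : ℤ) - n) • a} + hfold n (a +ᵥ (M : Set G)) := by
  obtain rfl | hn := eq_or_ne n 0
  · simp [h rfl]
  have hshift : {((m : ℤ) - n) • a} + hfold n (a +ᵥ (M : Set G)) = (m • a) +ᵥ (M : Set G) := by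
    rw [hfold_vadd_addSubmonoid a M hn, ← vadd_eq_add, Set.singleton_vadd, vadd_vadd, sub_smul,
      natCast_zsmul, natCast_zsmul, sub_add_cancel]
  rw [hshift]
  obtain rfl | hm := eq_or_ne m 0
  · simp [hfold]
  · exact (hfold_vadd_addSubmonoid a M hm).subset

lemma sum_hfold_vadd_subset [Fintype ι] (a : ι → G) (M : ι → AddSubmonoid G) {u v : ι → ℕ}
    (h : ∀ j, v j = 0 → u j = 0) :
    ∑ j, hfold (u j) (a j +ᵥ (M j : Set G)) ⊆
      {∑ j, ((u j : ℤ) - v j) • a j} + hfold (∑ j, v j) (⋃ j, a j +ᵥ (M j : Set G)) :=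
  calc ∑ j, hfold (u j) (a j +ᵥ (M j : Set G))
    _ ⊆ ∑ j, ({((u j : ℤ) - v j) • a j} + hfold (v j) (a j +ᵥ (M j : Set G))) :=
        Set.finsetSum_subset_finsetSum _ _ _ fun j _ =>
          hfold_vadd_addSubmonoid_subset (a j) (M j) (h j)
    _ = {∑ j, ((u j : ℤ) - v j) • a j} + ∑ j, hfold (v j) (a j +ᵥ (M j : Set G)) := by
        rw [Finset.sum_add_distrib, Set.finsetSum_singleton]
    _ ⊆ _ := Set.add_subset_add_left (sum_hfold_subset_hfold_iUnion _ v)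

end Translate

section Counting

lemma exists_eq_mul_add_le {m : ℕ} (hm : 0 < m) (x : ℕ) :
    ∃ c s, x = m * c + s ∧ s ≤ m ∧ (s = 0 → x = 0) := by
  obtain rfl | hx := Nat.eq_zero_or_pos x
  · exact ⟨0, 0, by simp⟩
  · refine ⟨(x - 1) / m, (x - 1) % m + 1, ?_, Nat.mod_lt _ hm, by omega⟩
    have := Nat.div_add_mod (x - 1) m
    omega

lemma exists_mul_lt_and_mul_lt_mul {n r h : ℕ} (hh : n * (r * n + 1) < h) :
    ∃ m, n * m < h ∧ r * h < (r * n + 1) * m := by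
  refine ⟨r * h / (r * n + 1) + 1, ?_, Nat.lt_mul_div_succ _ (Nat.succ_pos _)⟩
  have hdiv := Nat.mul_div_le (r * h) (r * n + 1)
  refine Nat.lt_of_mul_lt_mul_left (a := r * n + 1) ?_
  nlinarith [Nat.mul_le_mul_left n hdiv]

lemma card_sum_le_prod_card {G ι : Type*} [AddCommMonoid G] [DecidableEq G] (s : Finset ι)
    (X : ι → Finset G) : (∑ i ∈ s, X i).card ≤ ∏ i ∈ s, (X i).card := by
  induction s using Finset.cons_induction with
  | empty => simp
  | cons i s hi ih =>
    rw [Finset.sum_cons, Finset.prod_cons]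
    exact Finset.card_add_le.trans (Nat.mul_le_mul_left _ ih)

variable {ι : Type*} [Fintype ι] [DecidableEq ι]

lemma card_piAntidiag_univ_nat [Nonempty ι] (n : ℕ) :
    (Finset.piAntidiag (Finset.univ : Finset ι) n).card =
      (n + (Fintype.card ι - 1)).choose (Fintype.card ι - 1) := by
  rw [← Finset.map_sym_eq_piAntidiag, Finset.card_map, Finset.sym_univ, Finset.card_univ,
    Sym.card_sym_eq_choose, ← Nat.choose_symm_add]
  congr 1
  have := Fintype.card_pos (α := ι)
  omega

-- Off `i₀`, divide `u j` by `m` with remainder `v j ∈ [1, m]` (or `u j = v j = 0`); the coordinate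
-- `i₀` takes up whatever is needed for `c` and `v` to have totals `C` and `h`.
lemma exists_balanced_division (i₀ : ι) {m h C : ℕ} (hmh : (Fintype.card ι - 1) * m < h)
    (u : ι → ℕ) (hu : ∑ j, u j < (C + 1) * m) :
    ∃ c ∈ Finset.piAntidiag Finset.univ C, ∃ v : ι → ℕ, ∑ j, v j = h ∧
      (∀ j, v j = 0 → u j = 0) ∧
      ∀ j, (u j : ℤ) - v j =
        m * c j + (Pi.single i₀ (((∑ j, u j : ℕ) : ℤ) - h - m * C) : ι → ℤ) j := by
  have hm : 0 < m := Nat.pos_of_mul_pos_left (Nat.zero_lt_of_lt hu)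
  choose c s hdiv hs_le hs_zero using fun j => exists_eq_mul_add_le hm (u j)
  set others : Finset ι := Finset.univ \ {i₀}
  have hsum : ∑ j, u j = u i₀ + (m * ∑ j ∈ others, c j + ∑ j ∈ others, s j) := by
    rw [Finset.mul_sum, ← Finset.sum_add_distrib, ← Finset.sum_congr rfl fun j _ => hdiv j,
      ← Finset.sum_update_of_mem (Finset.mem_univ i₀), Function.update_eq_self]
  have hs : ∑ j ∈ others, s j < h :=
    calc ∑ j ∈ others, s j
      _ ≤ others.card • m := Finset.sum_le_card_nsmul _ _ _ fun j _ => hs_le j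
      _ = (Fintype.card ι - 1) * m := by
          rw [Finset.card_sdiff_of_subset (Finset.subset_univ _), Finset.card_singleton,
            Finset.card_univ, smul_eq_mul]
      _ < h := hmh
  have hc : ∑ j ∈ others, c j ≤ C :=
    Nat.le_of_lt_add_one <| Nat.lt_of_mul_lt_mul_left (a := m) <| by
      rw [mul_comm m (C + 1)]
      omega
  refine ⟨Function.update c i₀ (C - ∑ j ∈ others, c j), ?_,
    Function.update s i₀ (h - ∑ j ∈ others, s j), ?_, fun j hj => ?_, fun j => ?_⟩
  · simp [Finset.sum_update_of_mem, others, hc]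
  · rw [Finset.sum_update_of_mem (Finset.mem_univ i₀)]
    exact Nat.sub_add_cancel hs.le
  · obtain rfl | hj₀ := eq_or_ne j i₀
    · simp only [Function.update_self] at hj
      omega
    · exact hs_zero j (by simpa [hj₀] using hj)
  · obtain rfl | hj₀ := eq_or_ne j i₀
    · simp only [Function.update_self, Pi.single_eq_same, hsum]
      push_cast [hc, hs.le]
      ring
    · simp [hj₀, hdiv j]

end Counting

section ApproxGroup

/-- `A` is an asymptotic `(r, ℓ)`-approximate group: the single-set (`q = 1`) version of `IsCAAG`,
to which the chromatic statement is reduced one colour at a time. -/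
def IsAsymptoticApproxGroup {G : Type*} [AddCommMonoid G] (A : Set G) (r ℓ : ℕ) : Prop :=
  ∃ h₀ : ℕ, ∀ h, h₀ ≤ h → ∃ X : Finset G, X.card ≤ ℓ ∧ hfold (r * h) A ⊆ ↑X + hfold h A

lemma isAsymptoticApproxGroup_empty {G : Type*} [AddCommMonoid G] {r : ℕ} (hr : r ≠ 0) (ℓ : ℕ) :
    IsAsymptoticApproxGroup (∅ : Set G) r ℓ := by
  refine ⟨1, fun h hh => ⟨∅, by simp, ?_⟩⟩
  rw [hfold_empty (Nat.mul_ne_zero hr (Nat.one_le_iff_ne_zero.1 hh))]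
  exact Set.empty_subset _

variable {G : Type*} [AddCommGroup G]

lemma exists_hfold_iUnion_vadd_subset {ι : Type*} [Fintype ι] [Nonempty ι] (a : ι → G)
    (M : ι → AddSubmonoid G) {m h N C : ℕ} (hmh : (Fintype.card ι - 1) * m < h)
    (hN : N < (C + 1) * m) :
    ∃ X : Finset G, X.card ≤ (C + (Fintype.card ι - 1)).choose (Fintype.card ι - 1) ∧
      hfold N (⋃ j, a j +ᵥ (M j : Set G)) ⊆ ↑X + hfold h (⋃ j, a j +ᵥ (M j : Set G)) := by
  classical
  let i₀ : ι := Classical.arbitrary ι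
  let shift (c : ι → ℕ) : G :=
    ∑ j, ((m : ℤ) * c j + (Pi.single i₀ ((N : ℤ) - h - m * C) : ι → ℤ) j) • a j
  refine ⟨(Finset.piAntidiag Finset.univ C).image shift,
    Finset.card_image_le.trans (card_piAntidiag_univ_nat C).le, fun x hx => ?_⟩
  obtain ⟨u, rfl, hxu⟩ := exists_mem_sum_hfold_of_mem_hfold_iUnion hx
  obtain ⟨c, hc, v, rfl, hvu, huv⟩ := exists_balanced_division i₀ hmh u hN
  have hshift : shift c = ∑ j, ((u j : ℤ) - v j) • a j :=
    Finset.sum_congr rfl fun j _ => by rw [huv j]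
  refine Set.add_subset_add_right ?_ (sum_hfold_vadd_subset a M hvu hxu)
  exact Set.singleton_subset_iff.2 (Finset.mem_coe.2 (hshift ▸ Finset.mem_image_of_mem shift hc))

theorem isAsymptoticApproxGroup_iUnion_vadd {ι : Type*} [Fintype ι] (a : ι → G)
    (M : ι → AddSubmonoid G) {r : ℕ} (hr : r ≠ 0) :
    IsAsymptoticApproxGroup (⋃ j, a j +ᵥ (M j : Set G)) r
      (((r + 1) * (Fintype.card ι - 1)).choose (Fintype.card ι - 1)) := by
  cases isEmpty_or_nonempty ι
  · rw [Set.iUnion_of_empty]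
    exact isAsymptoticApproxGroup_empty hr _
  · set n := Fintype.card ι - 1
    refine ⟨n * (r * n + 1) + 1, fun h hh => ?_⟩
    obtain ⟨m, hmh, hrh⟩ := exists_mul_lt_and_mul_lt_mul hh
    rw [add_one_mul]
    exact exists_hfold_iUnion_vadd_subset a M hmh hrh

theorem isCAAG_of_isAsymptoticApproxGroup {q r : ℕ} {A : Fin q → Set G} {ℓ : Fin q → ℕ}
    (hA : ∀ i, IsAsymptoticApproxGroup (A i) r (ℓ i)) : IsCAAG A r (∏ i, ℓ i) := by
  classical
  choose h₀ hX using hA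
  refine ⟨h₀, fun h hh => ?_⟩
  choose X hcard hsub using fun i => hX i (h i) (hh i)
  refine ⟨∑ i, X i, (card_sum_le_prod_card _ X).trans (Finset.prod_le_prod' fun i _ => hcard i), ?_⟩
  rw [Finset.coe_sum, chromSum, chromSum, ← Finset.sum_add_distrib]
  exact Set.finsetSum_subset_finsetSum _ _ _ fun i _ => hsub i

theorem stmt13_general {q : ℕ} (A : Fin q → Set G) (k : Fin q → ℕ)
    (hdecomp : ∀ i, ∃ P : Fin (k i) → Set G,
      (∀ j, ∃ (a : G) (M : AddSubmonoid G), P j = a +ᵥ (M : Set G)) ∧ A i = ⋃ j, P j)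
    (r : ℕ) (hr : 0 < r) :
    IsCAAG A r (∏ i, ((r + 1) * (k i - 1)).choose (k i - 1)) := by
  refine isCAAG_of_isAsymptoticApproxGroup fun i => ?_
  obtain ⟨P, hP, hA⟩ := hdecomp i
  choose a M hP using hP
  simpa only [hA, hP, Fintype.card_fin] using isAsymptoticApproxGroup_iUnion_vadd a M hr.ne'

end ApproxGroup

/-- Chromatic theorem for unions of unbounded linear sets: if each `Aᵢ` is a union of
`kᵢ` unbounded linear sets, then `𝒜` is a chromatic asymptotic
`(r, ∏ᵢ C((r+1)(kᵢ−1), kᵢ−1))`-approximate group. -/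
theorem stmt13 {G : Type*} [AddCommGroup G] {q : ℕ} (A : Fin q → Set G) (k : Fin q → ℕ)
    (hdecomp : ∀ i, ∃ P : Fin (k i) → Set G,
      (∀ j, IsUnboundedLinear (P j)) ∧ A i = ⋃ j, P j)
    (r : ℕ) (hr : 0 < r) :
    IsCAAG A r (∏ i, ((r + 1) * (k i - 1)).choose (k i - 1)) :=
  stmt13_general A k (fun i => (hdecomp i).imp fun _ hP =>
    hP.imp_left fun hlin j => (hlin j).exists_eq_vadd) r hr
end
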